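/- Let n ≥ 2 and d = n−1, and let f ∈ 𝒯' be a periodic distribution with zero average, i.e. f̂(0) = 0. Then f = Σ_{A∈Gr(n−1,n)} R_{n−1,A} f, with the series converging in the sense of distributions; that is, a compactly supported (periodized) object with zero mean equals the sum of its (n−1)-plane Radon transform data over all rational hyperplane directions. -/

import Mathlib

/-!
Setting: the flat torus 𝕋ⁿ = ℝⁿ/ℤⁿ and its d-plane Radon transform.

* Periodic distributions 𝒯' are modeled, via the structure theorem, by their
  Fourier coefficient sequences `ℤⁿ → ℂ` of at most polynomial growth (`PDist`).
* `Gr d n` is the Grassmannian of d-dimensional subspaces of ℚⁿ.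
* The d-plane Radon transform is encoded on the Fourier side by the Fourier
  slice identity `(R_{d,A} f)^(k) = f̂(k)` if `k ⊥ A` and `0` otherwise (`radonC`).
* `hsNormSq s c = Σ_k ⟨k⟩^{2s} |c k|²` is the squared H^s(𝕋ⁿ) norm (in ℝ≥0∞),
  `dataNormSq s w g = Σ_A Σ_k ⟨k⟩^{2s} w(k,A)² |ĝ(k,A)|²` is the squared
  L_s^{2,2}(X_{d,n}; w) norm, `hsNorm`/`dataNorm` are their square roots.
* `Wk w k = Σ_{A ∈ Ω_k} w(k,A)²` and `radonStar` is the adjoint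
  `(R_d^* g)^(k) = Σ_{A ∈ Ω_k} w(k,A)² ĝ(k,A)`.
-/

open scoped ENNReal BigOperators
open MeasureTheory Classical Filter

noncomputable section

abbrev Zn (n : ℕ) := Fin n → ℤ
abbrev Tn (n : ℕ) := Fin n → AddCircle (1 : ℝ)

/-- Japanese bracket ⟨k⟩ = (1+|k|²)^{1/2}. -/
def jap {n : ℕ} (k : Zn n) : ℝ := Real.sqrt (1 + ∑ i, ((k i : ℝ))^2)

/-- Periodic distributions on 𝕋ⁿ, modeled via their Fourier coefficients
(structure theorem: 𝒯' ≅ sequences of at most polynomial growth). -/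
structure PDist (n : ℕ) where
  coef : Zn n → ℂ
  growth : ∃ C N : ℝ, 0 < C ∧ ∀ k, ‖coef k‖ ≤ C * jap k ^ N

/-- Grassmannian of d-dimensional subspaces of ℚⁿ. -/
def Gr (d n : ℕ) := {A : Submodule ℚ (Fin n → ℚ) // Module.finrank ℚ A = d}

/-- `k ⊥ A`. -/
def perp {d n : ℕ} (k : Zn n) (A : Gr d n) : Prop :=
  ∀ v ∈ A.1, ∑ i, (k i : ℚ) * v i = 0

/-- A weight `w : ℤⁿ × Gr(d,n) → (0,∞)` with at most polynomial decay in each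
variable `A`. -/
def IsWeight {d n : ℕ} (w : Zn n → Gr d n → ℝ) : Prop :=
  (∀ k A, 0 < w k A) ∧ ∀ A : Gr d n, ∃ C N : ℝ, 0 < C ∧ ∀ k, C * jap k ^ (-N) ≤ w k A

/-- Fourier-slice definition of the d-plane Radon transform `R_{d,A}`
on Fourier coefficient sequences. -/
def radonC {d n : ℕ} (A : Gr d n) (c : Zn n → ℂ) : Zn n → ℂ :=
  fun k => if perp k A then c k else 0

/-- The d-plane Radon transform `R_{d,A}` on periodic distributions. -/
def radonD {d n : ℕ} (A : Gr d n) (f : PDist n) : PDist n :=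
  ⟨radonC A f.coef, by
    obtain ⟨C, N, hC, h⟩ := f.growth
    refine ⟨C, N, hC, fun k => ?_⟩
    by_cases hk : perp k A
    · simpa [radonC, hk] using h k
    · simp only [radonC, hk, if_false, norm_zero]
      have h1 : 0 ≤ jap k ^ N := Real.rpow_nonneg (Real.sqrt_nonneg _) N
      positivity⟩

/-- Squared H^s(𝕋ⁿ) norm `Σ_k ⟨k⟩^{2s}|c k|²` (possibly infinite). -/
def hsNormSq {n : ℕ} (s : ℝ) (c : Zn n → ℂ) : ℝ≥0∞ :=
  ∑' k : Zn n, ENNReal.ofReal (jap k ^ (2*s) * ‖c k‖^2)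

/-- H^s(𝕋ⁿ) norm (possibly infinite). -/
def hsNorm {n : ℕ} (s : ℝ) (c : Zn n → ℂ) : ℝ≥0∞ := hsNormSq s c ^ (1/2 : ℝ)

/-- Squared L_s^{2,2}(X_{d,n}; w) norm (possibly infinite). -/
def dataNormSq {d n : ℕ} (s : ℝ) (w : Zn n → Gr d n → ℝ) (g : Gr d n → Zn n → ℂ) : ℝ≥0∞ :=
  ∑' A : Gr d n, ∑' k : Zn n, ENNReal.ofReal (jap k ^ (2*s) * (w k A)^2 * ‖g A k‖^2)

/-- L_s^{2,2}(X_{d,n}; w) norm (possibly infinite). -/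
def dataNorm {d n : ℕ} (s : ℝ) (w : Zn n → Gr d n → ℝ) (g : Gr d n → Zn n → ℂ) : ℝ≥0∞ :=
  dataNormSq s w g ^ (1/2 : ℝ)

/-- `W_k = Σ_{A ∈ Ω_k} w(k,A)²`. -/
def Wk {d n : ℕ} (w : Zn n → Gr d n → ℝ) (k : Zn n) : ℝ :=
  ∑' A : {A : Gr d n // perp k A}, (w k A.1)^2

/-- The adjoint `R_d^*`: `(R_d^* g)^(k) = Σ_{A ∈ Ω_k} w(k,A)² ĝ(k,A)`. -/
def radonStar {d n : ℕ} (w : Zn n → Gr d n → ℝ) (g : Gr d n → Zn n → ℂ) : Zn n → ℂ :=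
  fun k => ∑' A : {A : Gr d n // perp k A}, ((w k A.1 : ℝ) : ℂ)^2 * g A.1 k

/-- Test functions `C^∞(𝕋ⁿ)`, modeled via their rapidly decaying Fourier
coefficient sequences. -/
structure TestFun (n : ℕ) where
  coef : Zn n → ℂ
  decay : ∀ N : ℝ, ∃ C : ℝ, 0 < C ∧ ∀ k, ‖coef k‖ ≤ C * jap k ^ (-N)

/-- Duality pairing `(f, h) = Σ_k f̂(k) ĥ(−k)` between `𝒯'` and `C^∞(𝕋ⁿ)`. -/
def pairing {n : ℕ} (c : Zn n → ℂ) (h : TestFun n) : ℂ :=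
  ∑' k : Zn n, c k * h.coef (-k)

theorem summable_prod_aux (g : ℤ → ℝ) (hg : ∀ a, 0 ≤ g a) (hs : Summable g) (n : ℕ) :
    Summable (fun k : Fin n → ℤ => ∏ i, g (k i)) := by
  induction n with
  | zero => exact Summable.of_finite
  | succ n ih =>
    rw [← (Fin.consEquiv (fun _ : Fin (n+1) => ℤ)).summable_iff]
    have := hs.mul_of_nonneg ih hg (fun k => Finset.prod_nonneg fun i _ => hg _)
    refine this.congr ?_
    rintro ⟨a, k⟩
    simp [Fin.consEquiv, Fin.prod_univ_succ]

theorem jap_pos_aux {n : ℕ} (k : Zn n) : 0 < jap k := by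
  unfold jap
  apply Real.sqrt_pos.mpr
  positivity

theorem jap_neg_aux {n : ℕ} (k : Zn n) : jap (-k) = jap k := by
  simp [jap]

theorem summable_int_aux : Summable (fun a : ℤ => (1 + (a : ℝ)^2)⁻¹) := by
  have h1 : Summable (fun a : ℤ => 1 / (a : ℝ)^2) :=
    Real.summable_one_div_int_pow.mpr (by norm_num)
  refine Summable.of_norm_bounded_eventually h1 ?_
  have : ({0} : Set ℤ)ᶜ ∈ cofinite := (Set.finite_singleton 0).compl_mem_cofinite
  filter_upwards [this] with a ha
  have ha' : (a : ℝ) ≠ 0 := by simpa using ha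
  have h2 : 0 < (a : ℝ)^2 := by positivity
  rw [Real.norm_of_nonneg (by positivity), one_div]
  gcongr
  linarith

theorem summable_jap_aux (n : ℕ) : Summable (fun k : Zn n => jap k ^ (-(2 * n : ℝ))) := by
  refine Summable.of_nonneg_of_le (fun k => Real.rpow_nonneg (jap_pos_aux k).le _) ?_
    (summable_prod_aux _ (fun a => by positivity) summable_int_aux n)
  intro k
  have h0 : jap k ^ (-(2 * n : ℝ)) = ((1 + ∑ i, ((k i : ℝ))^2) ^ n)⁻¹ := by
    rw [Real.rpow_neg (jap_pos_aux k).le]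
    congr 1
    have : (2 * n : ℝ) = ((2 * n : ℕ) : ℝ) := by push_cast; rfl
    rw [this, Real.rpow_natCast, pow_mul, jap, Real.sq_sqrt (by positivity)]
  rw [h0, Finset.prod_inv_distrib]
  apply inv_anti₀
  · exact Finset.prod_pos fun i _ => by positivity
  · calc ∏ i, (1 + (k i : ℝ)^2) ≤ ∏ _i : Fin n, (1 + ∑ i, ((k i : ℝ))^2) := by
          refine Finset.prod_le_prod (fun i _ => by positivity) (fun i _ => ?_)
          have := Finset.single_le_sum (f := fun i => (k i : ℝ)^2)
            (fun i _ => sq_nonneg _) (Finset.mem_univ i)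
          simpa using this
      _ = _ := by simp

theorem summable_pairing_aux {n : ℕ} (f : PDist n) (h : TestFun n) :
    Summable (fun k => f.coef k * h.coef (-k)) := by
  obtain ⟨C, N, hC, hf⟩ := f.growth
  obtain ⟨C', hC', hh⟩ := h.decay (N + 2 * n)
  refine Summable.of_norm_bounded ((summable_jap_aux n).mul_left (C * C')) fun k => ?_
  rw [norm_mul]
  have h1 := hh (-k)
  rw [jap_neg_aux] at h1
  have hp := jap_pos_aux k
  calc ‖f.coef k‖ * ‖h.coef (-k)‖ ≤ (C * jap k ^ N) * (C' * jap k ^ (-(N + 2 * n))) := by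
        gcongr
        exact hf k
    _ = C * C' * (jap k ^ N * jap k ^ (-(N + 2 * n))) := by ring
    _ = _ := by rw [← Real.rpow_add hp]; congr 2; ring

/-- The functional `v ↦ k · v`. -/
def dotAux {n : ℕ} (k : Zn n) : Module.Dual ℚ (Fin n → ℚ) :=
  dotProductEquiv ℚ (Fin n) (fun i => (k i : ℚ))

theorem perp_iff_aux {d n : ℕ} (k : Zn n) (A : Gr d n) :
    perp k A ↔ A.1 ≤ LinearMap.ker (dotAux k) := by
  rfl

theorem dotAux_ne {n : ℕ} {k : Zn n} (hk : k ≠ 0) : dotAux k ≠ 0 := by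
  intro h
  apply hk
  have := (dotProductEquiv ℚ (Fin n)).map_eq_zero_iff.mp h
  funext i
  have h2 : ((k i : ℤ) : ℚ) = 0 := congrFun this i
  exact Int.cast_eq_zero.mp h2

theorem finrank_ker_aux {n : ℕ} {k : Zn n} (hk : k ≠ 0) :
    Module.finrank ℚ (LinearMap.ker (dotAux k)) = n - 1 := by
  have := Module.Dual.finrank_ker_add_one_of_ne_zero (dotAux_ne hk)
  simp at this
  omega

theorem exists_dir_aux {n : ℕ} (hn : 2 ≤ n) :
    ∃ φ : Zn n → Gr (n - 1) n, ∀ k ≠ 0, ∀ A, perp k A ↔ φ k = A := by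
  have h1 : (fun _ => 1 : Zn n) ≠ 0 := fun h => by
    have := congrFun h ⟨0, by omega⟩
    simp at this
  suffices H : ∀ k : Zn n, ∃ B : Gr (n - 1) n, k ≠ 0 → ∀ A : Gr (n - 1) n, perp k A ↔ B = A by
    choose φ hφ using H
    exact ⟨φ, hφ⟩
  intro k
  by_cases hk : k = 0
  · exact ⟨⟨_, finrank_ker_aux h1⟩, fun h => absurd hk h⟩
  refine ⟨⟨LinearMap.ker (dotAux k), finrank_ker_aux hk⟩, fun _ A => ?_⟩
  rw [perp_iff_aux]
  constructor
  · intro h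
    apply Subtype.ext
    exact (Submodule.eq_of_le_of_finrank_eq h (A.2.trans (finrank_ker_aux hk).symm)).symm
  · rintro rfl
    exact le_rfl

/-- A zero-average distribution is the sum of its
`(n−1)`-plane Radon transform data.
If `f ∈ 𝒯'` has zero average, `f̂(0) = 0`, then
`f = Σ_{A ∈ Gr(n−1,n)} R_{n−1,A} f` with the series converging in the sense of
distributions, i.e. tested against every `h ∈ C^∞(𝕋ⁿ)`. -/
theorem statement6 {n : ℕ} (hn : 2 ≤ n)
    (f : PDist n) (hf0 : f.coef 0 = 0) :
    ∀ h : TestFun n,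
      HasSum (fun A : Gr (n - 1) n => pairing (radonC A f.coef) h) (pairing f.coef h) := by
  intro h
  obtain ⟨φ, hφ⟩ := exists_dir_aux hn
  have hs := (summable_pairing_aux f h).hasSum.tsum_fiberwise φ
  suffices hE : (fun A : Gr (n - 1) n => pairing (radonC A f.coef) h) =
      fun A => ∑' b : φ ⁻¹' {A}, f.coef b * h.coef (-b) by
    rw [hE]
    exact hs
  funext A
  rw [tsum_subtype (φ ⁻¹' {A}) (fun b => f.coef b * h.coef (-b)), pairing]
  refine tsum_congr fun k => ?_
  by_cases hk : k = 0
  · subst hk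
    simp [radonC, hf0, Set.indicator]
  · simp [radonC, hφ k hk A, Set.indicator]
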